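/- Let X be a nonempty compact metric space, let φ_1,…,φ_n : X → X be maps that are all Lipschitz with constant γ ∈ (0,1), and let q_1,…,q_n ∈ ℝ be weights with max_{1≤j≤n} q_j = 0. Choose τ ∈ (γ,1). Then the Markov operator M(μ)(f) = max_{1≤j≤n} ( q_j + μ(f ∘ φ_j) ) is a Banach contraction with respect to d̃_{γ,τ}: for all idempotent probabilities μ, ν on X, d̃_{γ,τ}( M(μ), M(ν) ) ≤ (γ/τ) · d̃_{γ,τ}(μ, ν). -/

import Mathlib

def IsIdempotentProb {X : Type*} [TopologicalSpace X] (μ : C(X, ℝ) → ℝ) : Prop :=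
  (∀ (c : ℝ) (f : C(X, ℝ)), μ (ContinuousMap.const X c + f) = c + μ f) ∧
  (∀ f g : C(X, ℝ), μ (f ⊔ g) = max (μ f) (μ g)) ∧
  μ 0 = 0

/-- The pseudometric `d_a` on idempotent probabilities. -/
noncomputable def dLip {X : Type*} [MetricSpace X] (a : ℝ) (μ ν : C(X, ℝ) → ℝ) : ℝ :=
  sSup { r : ℝ | ∃ g : C(X, ℝ), LipschitzWith (Real.toNNReal a) g ∧ r = |μ g - ν g| }

/-- The metric `d̃_{β,τ}` on idempotent probabilities. -/
noncomputable def dtilde {X : Type*} [MetricSpace X] (β τ : ℝ) (μ ν : C(X, ℝ) → ℝ) : ℝ :=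
  ∑' i : ℤ, (τ ^ i.natAbs / β ^ i) * dLip (β ^ i) μ ν

/-!
Composing with a `γ`-Lipschitz map turns an `a`-Lipschitz test function into an `aγ`-Lipschitz one,
and a supremum of shifted values is `1`-Lipschitz in these values; hence
`d_a(Mμ, Mν) ≤ d_{aγ}(μ, ν)`. At `a = γ ^ i` this bounds the `i`-th distance by the `(i + 1)`-st,
and shifting the summation index costs at most a factor `γ / τ`, since `τ ^ |i| * τ ≤ τ ^ |i + 1|`.
The series converges because `inf g ≤ μ g ≤ sup g` gives `d_a(μ, ν) ≤ a * diam X`.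
-/

open Set

section Mean

variable {X : Type*} [TopologicalSpace X]

/-- A mean: a functional, not necessarily linear or monotone, whose value at `g` lies between the
infimum and the supremum of `g`; on a compact space, integration against a probability measure is
another example besides idempotent probabilities. Stated through constant bounds, so that unbounded
`g` need no convention. -/
structure IsMean (μ : C(X, ℝ) → ℝ) : Prop where
  apply_le : ∀ {g : C(X, ℝ)} {c : ℝ}, (∀ x, g x ≤ c) → μ g ≤ c
  le_apply : ∀ {g : C(X, ℝ)} {c : ℝ}, (∀ x, c ≤ g x) → c ≤ μ g

namespace IsIdempotentProb

variable {μ : C(X, ℝ) → ℝ}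

lemma monotone (hμ : IsIdempotentProb μ) : Monotone μ := fun f g hfg => by
  rw [← sup_eq_right.mpr hfg, hμ.2.1]
  exact le_max_left _ _

lemma apply_const (hμ : IsIdempotentProb μ) (c : ℝ) : μ (ContinuousMap.const X c) = c := by
  simpa only [add_zero, hμ.2.2] using hμ.1 c 0

lemma isMean (hμ : IsIdempotentProb μ) : IsMean μ where
  apply_le {_ c} h := (hμ.monotone h).trans_eq (hμ.apply_const c)
  le_apply {_ c} h := (hμ.apply_const c).symm.trans_le (hμ.monotone h)

end IsIdempotentProb

lemma IsMean.sub_le_of_forall_sub_le {μ ν : C(X, ℝ) → ℝ} (hμ : IsMean μ) (hν : IsMean ν)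
    {g : C(X, ℝ)} {D : ℝ} (hg : ∀ x y, g x - g y ≤ D) : μ g - ν g ≤ D := by
  have hμ_le (y : X) : μ g ≤ D + g y := hμ.apply_le fun x => sub_le_iff_le_add.mp (hg x y)
  have hν_ge : μ g - D ≤ ν g := hν.le_apply fun y => sub_le_iff_le_add'.mpr (hμ_le y)
  exact sub_le_comm.mp hν_ge

end Mean

section LipschitzDistance

open scoped NNReal

variable {X : Type*} [MetricSpace X] {μ ν : C(X, ℝ) → ℝ}

lemma IsMean.abs_sub_le_mul_diam [BoundedSpace X] (hμ : IsMean μ) (hν : IsMean ν)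
    {K : ℝ≥0} {g : C(X, ℝ)} (hg : LipschitzWith K g) :
    |μ g - ν g| ≤ K * Metric.diam (univ : Set X) := by
  have hosc (x y : X) : g x - g y ≤ K * Metric.diam (univ : Set X) :=
    calc g x - g y ≤ dist (g x) (g y) := le_abs_self _
      _ ≤ K * dist x y := hg.dist_le_mul x y
      _ ≤ K * Metric.diam (univ : Set X) := by
        gcongr
        exact Metric.dist_le_diam_of_mem (Bornology.IsBounded.all _) (mem_univ x) (mem_univ y)
  exact abs_sub_le_iff.mpr
    ⟨hμ.sub_le_of_forall_sub_le hν hosc, hν.sub_le_of_forall_sub_le hμ hosc⟩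

lemma dLip_nonneg (a : ℝ) (μ ν : C(X, ℝ) → ℝ) : 0 ≤ dLip a μ ν := by
  refine Real.sSup_nonneg ?_
  rintro _ ⟨g, -, rfl⟩
  exact abs_nonneg _

lemma dLip_le {a D : ℝ} (hD : 0 ≤ D)
    (h : ∀ g : C(X, ℝ), LipschitzWith a.toNNReal g → |μ g - ν g| ≤ D) : dLip a μ ν ≤ D := by
  refine Real.sSup_le ?_ hD
  rintro _ ⟨g, hg, rfl⟩
  exact h g hg

variable [BoundedSpace X]

lemma IsMean.dLip_le_mul_diam (hμ : IsMean μ) (hν : IsMean ν) (a : ℝ) :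
    dLip a μ ν ≤ a.toNNReal * Metric.diam (univ : Set X) :=
  dLip_le (mul_nonneg a.toNNReal.coe_nonneg Metric.diam_nonneg) fun _ =>
    hμ.abs_sub_le_mul_diam hν

lemma IsMean.abs_sub_le_dLip (hμ : IsMean μ) (hν : IsMean ν) {a : ℝ} {g : C(X, ℝ)}
    (hg : LipschitzWith a.toNNReal g) : |μ g - ν g| ≤ dLip a μ ν := by
  refine le_csSup ⟨a.toNNReal * Metric.diam (univ : Set X), ?_⟩ ⟨g, hg, rfl⟩
  rintro _ ⟨k, hk, rfl⟩
  exact hμ.abs_sub_le_mul_diam hν hk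

end LipschitzDistance

section MarkovOperator

variable {X ι : Type*}

/-- The max-plus Markov operator of the maps `φ` with weights `q`. The real-valued `⨆` is the
intended supremum when the family `q j + μ (f ∘ φ j)` is bounded above, and `0` otherwise. -/
noncomputable def maxPlusMarkov [TopologicalSpace X] (φ : ι → C(X, X)) (q : ι → ℝ)
    (μ : C(X, ℝ) → ℝ) (f : C(X, ℝ)) : ℝ :=
  ⨆ j, (q j + μ (f.comp (φ j)))

lemma IsMean.bddAbove_range_add_comp [TopologicalSpace X] {μ : C(X, ℝ) → ℝ} (hμ : IsMean μ)
    (φ : ι → C(X, X)) {q : ι → ℝ} (hq : BddAbove (range q))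
    {f : C(X, ℝ)} (hf : BddAbove (range f)) :
    BddAbove (range fun j => q j + μ (f.comp (φ j))) := by
  obtain ⟨b, hb⟩ := hq
  obtain ⟨c, hc⟩ := hf
  refine ⟨b + c, forall_mem_range.mpr fun j => ?_⟩
  exact add_le_add (hb (mem_range_self j)) (hμ.apply_le fun x => hc (mem_range_self (φ j x)))

lemma ciSup_sub_ciSup_le [Nonempty ι] {u v : ι → ℝ} {D : ℝ} (hv : BddAbove (range v))
    (h : ∀ j, u j - v j ≤ D) : (⨆ j, u j) - ⨆ j, v j ≤ D :=
  sub_le_iff_le_add.mpr <| ciSup_le fun j =>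
    (sub_le_iff_le_add.mp (h j)).trans (add_le_add_right (le_ciSup hv j) D)

lemma abs_ciSup_sub_ciSup_le [Nonempty ι] {u v : ι → ℝ} {D : ℝ} (hu : BddAbove (range u))
    (hv : BddAbove (range v)) (h : ∀ j, |u j - v j| ≤ D) : |(⨆ j, u j) - ⨆ j, v j| ≤ D :=
  abs_sub_le_iff.mpr
    ⟨ciSup_sub_ciSup_le hv fun j => (abs_sub_le_iff.mp (h j)).1,
      ciSup_sub_ciSup_le hu fun j => (abs_sub_le_iff.mp (h j)).2⟩

lemma IsMean.dLip_maxPlusMarkov_le [MetricSpace X] [BoundedSpace X] [Nonempty ι]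
    {μ ν : C(X, ℝ) → ℝ} (hμ : IsMean μ) (hν : IsMean ν) {γ : ℝ} {φ : ι → C(X, X)}
    (hφ : ∀ j, LipschitzWith γ.toNNReal (φ j)) {q : ι → ℝ} (hq : BddAbove (range q))
    {a : ℝ} (ha : 0 ≤ a) :
    dLip a (maxPlusMarkov φ q μ) (maxPlusMarkov φ q ν) ≤ dLip (a * γ) μ ν := by
  refine dLip_le (dLip_nonneg _ _ _) fun g hg => ?_
  have hg_bdd : BddAbove (range g) := by
    rw [← image_univ]
    exact (hg.isBounded_image (Bornology.IsBounded.all univ)).bddAbove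
  refine abs_ciSup_sub_ciSup_le (hμ.bddAbove_range_add_comp φ hq hg_bdd)
    (hν.bddAbove_range_add_comp φ hq hg_bdd) fun j => ?_
  have hcomp : LipschitzWith (a * γ).toNNReal (g.comp (φ j)) := by
    rw [Real.toNNReal_mul ha]
    exact hg.comp (hφ j)
  rw [add_sub_add_left_eq_sub]
  exact hμ.abs_sub_le_dLip hν hcomp

end MarkovOperator

section WeightedSum

variable {X : Type*} [MetricSpace X] {β τ : ℝ}

lemma summable_pow_natAbs (hτ0 : 0 ≤ τ) (hτ1 : τ < 1) : Summable fun i : ℤ => τ ^ i.natAbs := by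
  apply Summable.of_nat_of_neg <;>
    simpa only [Int.natAbs_neg, Int.natAbs_natCast] using summable_geometric_of_lt_one hτ0 hτ1

lemma IsMean.summable_dtilde [BoundedSpace X] {μ ν : C(X, ℝ) → ℝ} (hμ : IsMean μ) (hν : IsMean ν)
    (hβ : 0 < β) (hτ0 : 0 ≤ τ) (hτ1 : τ < 1) :
    Summable fun i : ℤ => τ ^ i.natAbs / β ^ i * dLip (β ^ i) μ ν := by
  refine Summable.of_nonneg_of_le (fun i => mul_nonneg (by positivity) (dLip_nonneg _ _ _))
    (fun i => ?_) ((summable_pow_natAbs hτ0 hτ1).mul_right (Metric.diam (univ : Set X)))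
  have hβi : 0 < β ^ i := zpow_pos hβ i
  calc τ ^ i.natAbs / β ^ i * dLip (β ^ i) μ ν
      ≤ τ ^ i.natAbs / β ^ i * (β ^ i * Metric.diam (univ : Set X)) := by
        gcongr
        simpa only [Real.coe_toNNReal _ hβi.le] using hμ.dLip_le_mul_diam hν (β ^ i)
    _ = τ ^ i.natAbs * Metric.diam (univ : Set X) := by field_simp

lemma pow_natAbs_div_zpow_le (hβ : 0 < β) (hτ0 : 0 < τ) (hτ1 : τ ≤ 1) (i : ℤ) :
    τ ^ i.natAbs / β ^ i ≤ β / τ * (τ ^ (i + 1).natAbs / β ^ (i + 1)) := by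
  have hpow : τ ^ i.natAbs * τ ≤ τ ^ (i + 1).natAbs := by
    rw [← pow_succ]
    exact pow_le_pow_of_le_one hτ0.le hτ1 (by lia)
  calc τ ^ i.natAbs / β ^ i = β / τ * (τ ^ i.natAbs * τ / β ^ (i + 1)) := by
        rw [zpow_add_one₀ hβ.ne']
        field_simp
    _ ≤ β / τ * (τ ^ (i + 1).natAbs / β ^ (i + 1)) := by gcongr

lemma dtilde_le_div_mul_dtilde {μ ν μ' ν' : C(X, ℝ) → ℝ} (hβ : 0 < β) (hτ0 : 0 < τ) (hτ1 : τ ≤ 1)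
    (hsum : Summable fun i : ℤ => τ ^ i.natAbs / β ^ i * dLip (β ^ i) μ ν)
    (h : ∀ i : ℤ, dLip (β ^ i) μ' ν' ≤ dLip (β ^ (i + 1)) μ ν) :
    dtilde β τ μ' ν' ≤ β / τ * dtilde β τ μ ν := by
  let term (i : ℤ) : ℝ := τ ^ i.natAbs / β ^ i * dLip (β ^ i) μ ν
  have hterm (i : ℤ) : τ ^ i.natAbs / β ^ i * dLip (β ^ i) μ' ν' ≤ β / τ * term (i + 1) :=
    calc τ ^ i.natAbs / β ^ i * dLip (β ^ i) μ' ν'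
        ≤ β / τ * (τ ^ (i + 1).natAbs / β ^ (i + 1)) * dLip (β ^ (i + 1)) μ ν :=
          mul_le_mul (pow_natAbs_div_zpow_le hβ hτ0 hτ1 i) (h i) (dLip_nonneg _ _ _)
            (by positivity)
      _ = β / τ * term (i + 1) := mul_assoc _ _ _
  have hshift : Summable fun i : ℤ => β / τ * term (i + 1) :=
    ((Equiv.addRight (1 : ℤ)).summable_iff.mpr hsum).mul_left (β / τ)
  have hsum' : Summable fun i : ℤ => τ ^ i.natAbs / β ^ i * dLip (β ^ i) μ' ν' :=
    hshift.of_nonneg_of_le (fun i => mul_nonneg (by positivity) (dLip_nonneg _ _ _)) hterm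
  calc dtilde β τ μ' ν' ≤ ∑' i : ℤ, β / τ * term (i + 1) := hsum'.tsum_le_tsum hterm hshift
    _ = β / τ * ∑' i : ℤ, term (i + 1) := tsum_mul_left
    _ = β / τ * dtilde β τ μ ν := congrArg _ ((Equiv.addRight (1 : ℤ)).tsum_eq term)

end WeightedSum

theorem markov_operator_contraction_finite_general
    {X ι : Type*} [MetricSpace X] [BoundedSpace X] [Nonempty ι] {γ τ : ℝ} (hγ : 0 < γ)
    (hτ0 : 0 < τ) (hτ1 : τ < 1) {φ : ι → C(X, X)} (hφ : ∀ j, LipschitzWith γ.toNNReal (φ j))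
    {q : ι → ℝ} (hq : BddAbove (range q)) {μ ν : C(X, ℝ) → ℝ} (hμ : IsMean μ) (hν : IsMean ν) :
    dtilde γ τ (maxPlusMarkov φ q μ) (maxPlusMarkov φ q ν) ≤ γ / τ * dtilde γ τ μ ν := by
  refine dtilde_le_div_mul_dtilde hγ hτ0 hτ1.le (hμ.summable_dtilde hν hγ hτ0.le hτ1) fun i => ?_
  rw [zpow_add_one₀ hγ.ne']
  exact hμ.dLip_maxPlusMarkov_le hν hφ hq (zpow_nonneg hγ.le i)

theorem markov_operator_contraction_finite
    {X : Type*} [MetricSpace X] [CompactSpace X] [Nonempty X]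
    (γ : ℝ) (hγ0 : 0 < γ) (hγ1 : γ < 1)
    (n : ℕ) (φ : Fin (n + 1) → X → X) (hφ : ∀ j, LipschitzWith (Real.toNNReal γ) (φ j))
    (q : Fin (n + 1) → ℝ)
    (hq : Finset.univ.sup' Finset.univ_nonempty q = 0)
    (τ : ℝ) (hτγ : γ < τ) (hτ1 : τ < 1)
    (μ ν : C(X, ℝ) → ℝ) (hμ : IsIdempotentProb μ) (hν : IsIdempotentProb ν) :
    dtilde γ τ
        (fun f : C(X, ℝ) => Finset.univ.sup' Finset.univ_nonempty
          (fun j => q j + μ (f.comp ⟨φ j, (hφ j).continuous⟩)))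
        (fun f : C(X, ℝ) => Finset.univ.sup' Finset.univ_nonempty
          (fun j => q j + ν (f.comp ⟨φ j, (hφ j).continuous⟩))) ≤
      (γ / τ) * dtilde γ τ μ ν := by
  simp only [Finset.sup'_univ_eq_ciSup]
  exact markov_operator_contraction_finite_general hγ0 (hγ0.trans hτγ) hτ1 hφ
    (finite_range q).bddAbove hμ.isMean hν.isMean
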